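/- arXiv:2401.00244 — 2 statements merged into one kernel-verified Lean document; each statement's English description precedes it below -/
import Mathlib

section
/- Let p ≥ 2 be an even integer. Then S(1, 1, p; −1) = (−p² − 2)/(6p); that is, (1/p) Σ_{j=1}^{p−1} (−1)^j csc²(jπ/p) = −(p² + 2)/(6p). -/
open Real

/-- The Dedekind cosecant sum
`S(q,r,p;ε) = (1/p) ∑_{j=1}^{|p|−1} ε^j csc(jqπ/p) csc(jrπ/p)`. -/
noncomputable def cosecSum (q r p : ℤ) (ε : ℝ) : ℝ :=
  (1 / (p : ℝ)) * ∑ j ∈ Finset.Icc 1 (p.natAbs - 1),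
    ε ^ j * (1 / Real.sin ((j : ℝ) * (q : ℝ) * π / (p : ℝ))) *
      (1 / Real.sin ((j : ℝ) * (r : ℝ) * π / (p : ℝ)))

/-!
Write `x j = jπ/n`. The Fejér kernel `(sin (t * x j) / sin (x j)) ^ 2` increases by the Dirichlet
kernel `sin ((2 * t + 1) * x j) / sin (x j)` from `t` to `t + 1`, so its sum over `0 < j < n` is
`t * (n - t)` for `0 ≤ t ≤ n`. As `2 * sin (t * x j) ^ 2 = 1 - cos (2 * t * x j)`, this determines
the cosine transform of `csc ^ 2 (x j)` up to its value at `t = 0`, and averaging over `0 ≤ t < n`,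
where `sin (t * x j) ^ 2` has mean `1 / 2`, gives that value: `(n ^ 2 - 1) / 3`.
The signs `(-1) ^ j` are the frequency `2 * t = n`.
-/

open Finset

lemma sin_sq_sub_sin_sq (x y : ℝ) : sin x ^ 2 - sin y ^ 2 = sin (x + y) * sin (x - y) := by
  rw [sin_add, sin_sub]
  linear_combination sin y ^ 2 * sin_sq_add_cos_sq x - sin x ^ 2 * sin_sq_add_cos_sq y

lemma sin_add_one_mul_sq (t x : ℝ) :
    sin ((t + 1) * x) ^ 2 = sin (t * x) ^ 2 + sin ((2 * t + 1) * x) * sin x := by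
  rw [← sub_eq_iff_eq_add', sin_sq_sub_sin_sq]
  ring_nf

lemma sin_two_mul_add_three_mul (t x : ℝ) :
    sin ((2 * t + 3) * x) = sin ((2 * t + 1) * x) + 2 * cos (2 * (t + 1) * x) * sin x := by
  rw [← sub_eq_iff_eq_add', sin_sub_sin]
  ring_nf

lemma sum_range_mul_sub (a : ℝ) (m : ℕ) :
    ∑ t ∈ range m, (t : ℝ) * (a - t) = m * (m - 1) * (3 * a - 2 * m + 1) / 6 := by
  induction m with
  | zero => simp
  | succ m ih =>
    rw [sum_range_succ, ih]
    push_cast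
    ring

section CosecantSums

variable {n t j k : ℕ}

lemma sin_mul_pi_div_ne_zero (hn : n ≠ 0) (hk : ¬n ∣ k) : sin (k * π / n) ≠ 0 := by
  rw [Ne, sin_eq_zero_iff]
  rintro ⟨m, hm⟩
  have hkm : (k : ℝ) = n * m := by
    field_simp at hm
    linarith
  exact hk (Int.natCast_dvd_natCast.mp ⟨m, mod_cast hkm⟩)

lemma sin_mul_pi_div_ne_zero_of_mem_Ico (hj : j ∈ Ico 1 n) : sin (j * π / n) ≠ 0 := by
  obtain ⟨hj_pos, hj_lt⟩ := mem_Ico.mp hj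
  exact sin_mul_pi_div_ne_zero (by lia) (Nat.not_dvd_of_pos_of_lt hj_pos hj_lt)

lemma sum_range_cos_eq_zero (hk : ¬n ∣ k) :
    ∑ j ∈ range n, cos (2 * k * (j * π / n)) = 0 := by
  rcases eq_or_ne n 0 with rfl | hn
  · simp
  have hsum := Real.sin_mul_sum_cos n (2 * (k * π / n)) 0
  have hend : n * (2 * (k * π / n)) / 2 = k * π := by field_simp
  rw [hend, sin_nat_mul_pi, zero_mul, mul_div_cancel_left₀ _ two_ne_zero] at hsum
  convert (mul_eq_zero.mp hsum).resolve_left (sin_mul_pi_div_ne_zero hn hk) using 3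
  ring

lemma sum_Ico_cos_eq_neg_one (hn : n ≠ 0) (hk : ¬n ∣ k) :
    ∑ j ∈ Ico 1 n, cos (2 * k * (j * π / n)) = -1 := by
  have hsum := sum_range_cos_eq_zero hk
  rw [sum_range_eq_add_Ico _ (Nat.pos_of_ne_zero hn)] at hsum
  simp only [Nat.cast_zero, zero_mul, zero_div, mul_zero, cos_zero] at hsum
  linarith

lemma sum_range_sin_sq (hj : ¬n ∣ j) :
    ∑ t ∈ range n, sin (t * (j * π / n)) ^ 2 = n / 2 := by
  have hcos : ∑ t ∈ range n, cos (2 * (t * (j * π / n))) = 0 := by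
    convert sum_range_cos_eq_zero hj using 3
    ring
  simp only [sin_sq_eq_half_sub, sum_sub_distrib, ← sum_div, hcos, sum_const, card_range,
    nsmul_eq_mul]
  ring

lemma sum_sin_odd_mul_div_sin (ht : t < n) :
    ∑ j ∈ Ico 1 n, sin ((2 * t + 1) * (j * π / n)) / sin (j * π / n) = n - 1 - 2 * t := by
  induction t with
  | zero =>
    have hone (j) (hj : j ∈ Ico 1 n) :
        sin ((2 * (0 : ℕ) + 1) * (j * π / n)) / sin (j * π / n) = 1 := by
      simp [sin_mul_pi_div_ne_zero_of_mem_Ico hj]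
    rw [sum_congr rfl hone]
    simp [Nat.cast_sub (show 1 ≤ n by lia)]
  | succ t ih =>
    have hstep (j) (hj : j ∈ Ico 1 n) :
        sin ((2 * (t + 1 : ℕ) + 1) * (j * π / n)) / sin (j * π / n) =
          sin ((2 * t + 1) * (j * π / n)) / sin (j * π / n) +
            2 * cos (2 * (t + 1 : ℕ) * (j * π / n)) := by
      rw [div_add' _ _ _ (sin_mul_pi_div_ne_zero_of_mem_Ico hj), Nat.cast_add_one,
        ← sin_two_mul_add_three_mul]
      ring_nf
    rw [sum_congr rfl hstep, sum_add_distrib, ← mul_sum, ih (by lia),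
      sum_Ico_cos_eq_neg_one (by lia) (Nat.not_dvd_of_pos_of_lt t.succ_pos ht)]
    push_cast
    ring

lemma sum_sin_mul_div_sin_sq (ht : t ≤ n) :
    ∑ j ∈ Ico 1 n, (sin (t * (j * π / n)) / sin (j * π / n)) ^ 2 = t * (n - t) := by
  induction t with
  | zero => simp
  | succ t ih =>
    have hstep (j) (hj : j ∈ Ico 1 n) :
        (sin ((t + 1 : ℕ) * (j * π / n)) / sin (j * π / n)) ^ 2 =
          (sin (t * (j * π / n)) / sin (j * π / n)) ^ 2 +
            sin ((2 * t + 1) * (j * π / n)) / sin (j * π / n) := by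
      have hsin := sin_mul_pi_div_ne_zero_of_mem_Ico hj
      rw [Nat.cast_add_one, div_pow, sin_add_one_mul_sq]
      field_simp
    rw [sum_congr rfl hstep, sum_add_distrib, ih (by lia), sum_sin_odd_mul_div_sin (by lia)]
    push_cast
    ring

lemma sum_csc_sq (hn : n ≠ 0) :
    ∑ j ∈ Ico 1 n, (1 / sin (j * π / n)) ^ 2 = ((n : ℝ) ^ 2 - 1) / 3 := by
  have hn' : (n : ℝ) ≠ 0 := mod_cast hn
  have hweighted : (n : ℝ) / 2 * ∑ j ∈ Ico 1 n, (1 / sin (j * π / n)) ^ 2 =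
      n * ((n : ℝ) ^ 2 - 1) / 6 :=
    calc
      _ = ∑ j ∈ Ico 1 n, ∑ t ∈ range n, (sin (t * (j * π / n)) / sin (j * π / n)) ^ 2 := by
        rw [mul_sum]
        refine sum_congr rfl fun j hj ↦ ?_
        obtain ⟨hj_pos, hj_lt⟩ := mem_Ico.mp hj
        simp only [div_pow, one_pow, ← sum_div]
        rw [sum_range_sin_sq (Nat.not_dvd_of_pos_of_lt hj_pos hj_lt), mul_one_div]
      _ = ∑ t ∈ range n, (t : ℝ) * (n - t) := by
        rw [sum_comm]
        exact sum_congr rfl fun t ht ↦ sum_sin_mul_div_sin_sq (mem_range.mp ht).le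
      _ = n * ((n : ℝ) ^ 2 - 1) / 6 := by
        rw [sum_range_mul_sub]
        ring
  apply mul_left_cancel₀ (div_ne_zero hn' two_ne_zero)
  rw [hweighted]
  ring

lemma sum_cos_mul_csc_sq (hn : n ≠ 0) (ht : t ≤ n) :
    ∑ j ∈ Ico 1 n, cos (2 * t * (j * π / n)) * (1 / sin (j * π / n)) ^ 2 =
      ((n : ℝ) ^ 2 - 1) / 3 - 2 * (t * (n - t)) := by
  rw [← sum_csc_sq hn, ← sum_sin_mul_div_sin_sq ht, mul_sum, ← sum_sub_distrib]
  refine sum_congr rfl fun j _ ↦ ?_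
  rw [mul_assoc 2, cos_two_mul_eq_one_sub]
  ring

lemma sum_neg_one_pow_mul_csc_sq (hn : n ≠ 0) (heven : Even n) :
    ∑ j ∈ Ico 1 n, (-1 : ℝ) ^ j * (1 / sin (j * π / n)) ^ 2 = -((n : ℝ) ^ 2 + 2) / 6 := by
  obtain ⟨t, hnt⟩ := heven
  have hn' : (n : ℝ) ≠ 0 := mod_cast hn
  have hcast : (n : ℝ) = 2 * t := by
    rw [hnt]
    push_cast
    ring
  have hsign (j : ℕ) : (-1 : ℝ) ^ j = cos (2 * t * (j * π / n)) := by
    rw [← hcast, mul_div_cancel₀ _ hn', cos_nat_mul_pi]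
  simp only [hsign]
  rw [sum_cos_mul_csc_sq hn (by lia), hcast]
  ring

end CosecantSums

lemma cosecSum_self (q p : ℤ) (ε : ℝ) :
    cosecSum q q p ε =
      1 / p * ∑ j ∈ Icc 1 (p.natAbs - 1), ε ^ j * (1 / sin (j * q * π / p)) ^ 2 := by
  simp only [cosecSum, mul_assoc, sq]

/-- For even `p ≥ 2`, `S(1, 1, p; −1) = (−p² − 2)/(6p)`; that is,
`(1/p) ∑_{j=1}^{p−1} (−1)^j csc²(jπ/p) = −(p² + 2)/(6p)`. -/
theorem stmt_16 (p : ℕ) (hp : 2 ≤ p) (heven : Even p) :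
    cosecSum 1 1 (p : ℤ) (-1) = (-(p : ℝ) ^ 2 - 2) / (6 * (p : ℝ)) ∧
    (1 / (p : ℝ)) * ∑ j ∈ Finset.Icc 1 (p - 1),
        (-1 : ℝ) ^ j * (1 / Real.sin ((j : ℝ) * π / (p : ℝ))) ^ 2 =
      -((p : ℝ) ^ 2 + 2) / (6 * (p : ℝ)) := by
  have hp_ne : p ≠ 0 := by lia
  have hIcc : Icc 1 (p - 1) = Ico 1 p :=
    Icc_sub_one_right_eq_Ico_of_not_isMin (by simpa using hp_ne) 1
  have hsum : (1 / (p : ℝ)) * ∑ j ∈ Icc 1 (p - 1), (-1 : ℝ) ^ j * (1 / sin (j * π / p)) ^ 2 =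
      -((p : ℝ) ^ 2 + 2) / (6 * p) := by
    rw [hIcc, sum_neg_one_pow_mul_csc_sq hp_ne heven, div_mul_div_comm, one_mul, mul_comm (p : ℝ)]
  refine ⟨?_, hsum⟩
  rw [cosecSum_self]
  simp only [Int.natAbs_natCast, Int.cast_natCast, Int.cast_one, mul_one]
  rw [hsum, neg_add']
end

section
/- Let p and q be coprime nonzero integers with p ≢ q (mod 2). Then S(q, 1, p; −1) + S(p, 1, q; −1) = −p/(6q) − q/(6p) − 1/(6pq). -/
open Real

/-!
For positive `p`, `q`, `r` put `n = (p + q + r) / 2`. By pairwise coprimality the nontrivial `p`-th,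
`q`-th and `r`-th roots of unity are simple poles of
`z ^ (n - 1) / ((z ^ p - 1) * (z ^ q - 1) * (z ^ r - 1))`. At `z = exp (2 * π * I * j / p)` the
factor `z ^ n` splits into the sign `(-1) ^ j` and the numerators of the two cosecants, so the
residues at the `p`-th roots of unity add up to `-S(q, r, p; -1) / 4`, and similarly for `q` and
`r`. The residue at infinity vanishes, and the one at the triple pole `1` is an explicit rational
function of `p`, `q` and `r`. Taking `r = 1` removes the third sum.
-/

section PartialFractions

open Polynomial Lagrange

variable {K ι : Type*} [Field K] [DecidableEq ι] {s : Finset ι} {v : ι → K}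

lemma eq_nodal_mul_divByMonic_add_sum (hv : Set.InjOn v s) (F : K[X]) :
    F = nodal s v * (F /ₘ nodal s v) +
      ∑ i ∈ s, C (nodalWeight s v i * F.eval (v i)) * nodal (s.erase i) v := by
  have remainder : F %ₘ nodal s v = interpolate s v fun i ↦ F.eval (v i) := by
    refine eq_interpolate_of_eval_eq _ hv ?_ fun i hi ↦ ?_
    · simpa only [degree_nodal] using degree_modByMonic_lt F (nodal_monic (s := s) (v := v))
    · exact eval₂_modByMonic_eq_self_of_root (eval_nodal_at_node hi)
  conv_lhs => rw [← modByMonic_add_div F (nodal s v), add_comm, remainder,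
    interpolate_eq_nodalWeight_mul_nodal_div_X_sub_C]
  congr 1
  refine Finset.sum_congr rfl fun i hi ↦ ?_
  rw [nodal_erase_eq_nodal_div hi, C_mul]
  ring

lemma coeff_divByMonic_eq_zero_of_degree_lt {F D : K[X]} (hD : D.Monic) {m : ℕ}
    (hF : F.degree < D.degree + m) : (F /ₘ D).coeff m = 0 := by
  rcases lt_or_ge F.degree D.degree with h | h
  · rw [(divByMonic_eq_zero_iff hD).2 h, coeff_zero]
  · rw [← degree_add_divByMonic hD h] at hF
    exact coeff_eq_zero_of_degree_lt (lt_of_add_lt_add_left hF)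

lemma coeff_inv_X_sub_C {x : K} (hx : x ≠ 0) (m : ℕ) :
    PowerSeries.coeff m (PowerSeries.X - PowerSeries.C x)⁻¹ = -(x ^ (m + 1))⁻¹ := by
  have inverse : (PowerSeries.X - PowerSeries.C x)⁻¹ =
      -PowerSeries.invUnitsSub (Units.mk0 x hx) := by
    rw [PowerSeries.inv_eq_iff_mul_eq_one (by simpa using hx), neg_mul_comm, neg_sub]
    exact PowerSeries.invUnitsSub_mul_sub (Units.mk0 x hx)
  rw [inverse, map_neg, PowerSeries.coeff_invUnitsSub, one_divp, Units.val_inv_eq_inv_val,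
    Units.val_pow_eq_pow_val, Units.val_mk0]

/-- The residue theorem for `F / (X ^ (m + 1) * nodal s v)`: the degree bound kills the residue at
infinity, and the right-hand side is minus the residue at `0`. -/
theorem sum_nodalWeight_mul_eval_div_pow (hv : Set.InjOn v s) (hv₀ : ∀ i ∈ s, v i ≠ 0)
    {F : K[X]} {m : ℕ} (hF : F.degree < (s.card + m : ℕ)) :
    ∑ i ∈ s, nodalWeight s v i * F.eval (v i) / v i ^ (m + 1) =
      -PowerSeries.coeff m ((F : PowerSeries K) * (nodal s v : PowerSeries K)⁻¹) := by
  have constantCoeff_ne_zero : ∀ t ⊆ s,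
      PowerSeries.constantCoeff (nodal t v : PowerSeries K) ≠ 0 := fun t ht ↦ by
    simpa [← PowerSeries.coeff_zero_eq_constantCoeff_apply, coeff_zero_eq_eval_zero, eval_nodal,
      Finset.prod_ne_zero_iff] using fun i hi ↦ hv₀ i (ht hi)
  have nodal_erase_div : ∀ i ∈ s, (nodal (s.erase i) v : PowerSeries K) *
      (nodal s v : PowerSeries K)⁻¹ = (PowerSeries.X - PowerSeries.C (v i))⁻¹ := fun i hi ↦ by
    rw [nodal_eq_mul_nodal_erase hi, Polynomial.coe_mul, PowerSeries.mul_inv_rev, ← mul_assoc,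
      PowerSeries.mul_inv_cancel _ (constantCoeff_ne_zero _ (Finset.erase_subset i s)), one_mul,
      Polynomial.coe_sub, Polynomial.coe_X, Polynomial.coe_C]
  have partial_fractions : (F : PowerSeries K) * (nodal s v : PowerSeries K)⁻¹ =
      (F /ₘ nodal s v : K[X]) + ∑ i ∈ s, PowerSeries.C (nodalWeight s v i * F.eval (v i)) *
        (PowerSeries.X - PowerSeries.C (v i))⁻¹ := by
    conv_lhs => rw [eq_nodal_mul_divByMonic_add_sum hv F]
    rw [Polynomial.coe_add, Polynomial.coe_mul, ← coeToPowerSeries.ringHom_apply (φ := ∑ i ∈ s, _),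
      map_sum, add_mul, mul_right_comm,
      PowerSeries.mul_inv_cancel _ (constantCoeff_ne_zero s subset_rfl), one_mul, Finset.sum_mul]
    congr 1
    refine Finset.sum_congr rfl fun i hi ↦ ?_
    rw [coeToPowerSeries.ringHom_apply, Polynomial.coe_mul, Polynomial.coe_C, mul_assoc,
      nodal_erase_div i hi]
  have quotient_coeff : (F /ₘ nodal s v).coeff m = 0 :=
    coeff_divByMonic_eq_zero_of_degree_lt nodal_monic (by simpa [degree_nodal] using hF)
  rw [partial_fractions, map_add, Polynomial.coeff_coe, quotient_coeff, zero_add, map_sum,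
    ← Finset.sum_neg_distrib]
  refine Finset.sum_congr rfl fun i hi ↦ ?_
  rw [PowerSeries.coeff_C_mul, coeff_inv_X_sub_C (hv₀ i hi), mul_neg, neg_neg, div_eq_mul_inv]

end PartialFractions

section RootsOfUnity

open Polynomial

/-- The polynomial `((1 + X) ^ n - 1) / X = 1 + (1 + X) + ⋯ + (1 + X) ^ (n - 1)`, whose roots are
the `z - 1` with `z ≠ 1` an `n`-th root of unity. The shift by `1` moves the multiple pole of the
reciprocity argument to the origin. -/
noncomputable def shiftedGeomSum (R : Type*) [CommRing R] (n : ℕ) : R[X] :=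
  (∑ i ∈ Finset.range n, X ^ i).comp (X + 1)

variable {R : Type*} [CommRing R]

lemma coeff_shiftedGeomSum (n k : ℕ) :
    (shiftedGeomSum R n).coeff k = (n.choose (k + 1) : R) := by
  rw [shiftedGeomSum, geom_sum_X_comp_X_add_one_eq_sum]
  simp only [finsetSum_coeff, ← C_eq_natCast, coeff_C_mul_X_pow]
  rw [Finset.sum_ite_eq (Finset.range n) k, ite_eq_left_iff, Finset.mem_range, not_lt]
  exact fun h ↦ by rw [Nat.choose_eq_zero_of_lt (by lia), Nat.cast_zero]

lemma shiftedGeomSum_mul_X (n : ℕ) : shiftedGeomSum R n * X = (X + 1) ^ n - 1 := by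
  have h := congrArg (comp · (X + 1)) (geom_sum_mul (X : R[X]) n)
  simp only [mul_comp, sub_comp, X_comp, one_comp, X_pow_comp, add_sub_cancel_right] at h
  exact h

lemma eval_shiftedGeomSum_mul (n : ℕ) (z : R) :
    (shiftedGeomSum R n).eval (z - 1) * (z - 1) = z ^ n - 1 := by
  simpa using congrArg (eval (z - 1)) (shiftedGeomSum_mul_X n)

variable [IsDomain R] {n : ℕ} {z ζ : R}

lemma eval_shiftedGeomSum_eq_zero (hz : z ≠ 1) (hzn : z ^ n = 1) :
    (shiftedGeomSum R n).eval (z - 1) = 0 := by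
  have h := eval_shiftedGeomSum_mul n z
  rw [hzn, sub_self] at h
  exact (mul_eq_zero.1 h).resolve_right (sub_ne_zero.2 hz)

lemma eval_derivative_shiftedGeomSum_mul (hz : z ≠ 1) (hzn : z ^ n = 1) :
    (derivative (shiftedGeomSum R n)).eval (z - 1) * (z - 1) * z = n := by
  have h := congrArg (fun f ↦ eval (z - 1) (derivative f)) (shiftedGeomSum_mul_X (R := R) n)
  simp only [derivative_mul, derivative_X, mul_one, eval_add, eval_mul, eval_X,
    eval_shiftedGeomSum_eq_zero hz hzn, add_zero, derivative_sub, derivative_pow, map_natCast,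
    derivative_add, derivative_one, sub_zero, eval_natCast, eval_pow, eval_one,
    sub_add_cancel] at h
  rw [h]
  rcases n with _ | n
  · simp
  · rw [Nat.add_sub_cancel, mul_assoc, ← pow_succ, hzn, mul_one]

open scoped Classical in
/-- The `n`-th roots of unity in `R` other than `1`, over which Dedekind-type sums range. -/
noncomputable def nontrivialRootsOfUnity (R : Type*) [CommRing R] [IsDomain R] (n : ℕ) :
    Finset R :=
  (nthRootsFinset n (1 : R)).erase 1

lemma mem_nontrivialRootsOfUnity (hn : 0 < n) :
    z ∈ nontrivialRootsOfUnity R n ↔ z ≠ 1 ∧ z ^ n = 1 := by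
  classical rw [nontrivialRootsOfUnity, Finset.mem_erase, mem_nthRootsFinset hn]

lemma card_nontrivialRootsOfUnity (hn : 0 < n) (hζ : IsPrimitiveRoot ζ n) :
    (nontrivialRootsOfUnity R n).card = n - 1 := by
  classical
  rw [nontrivialRootsOfUnity, Finset.card_erase_of_mem (one_mem_nthRootsFinset hn),
    hζ.card_nthRootsFinset]

lemma sum_nontrivialRootsOfUnity {M : Type*} [AddCommMonoid M] (hn : 0 < n)
    (hζ : IsPrimitiveRoot ζ n) (f : R → M) :
    ∑ z ∈ nontrivialRootsOfUnity R n, f z = ∑ j ∈ Finset.Icc 1 (n - 1), f (ζ ^ j) := by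
  have : NeZero n := ⟨hn.ne'⟩
  refine (Finset.sum_nbij (ζ ^ ·) (fun j hj ↦ ?_) (fun i hi j hj h ↦ ?_) (fun z hz ↦ ?_)
    fun _ _ ↦ rfl).symm
  · rw [Finset.mem_Icc] at hj
    rw [mem_nontrivialRootsOfUnity hn, pow_right_comm, hζ.pow_eq_one, one_pow]
    exact ⟨hζ.pow_ne_one_of_pos_of_lt (by lia) (by lia), rfl⟩
  · rw [Finset.mem_coe, Finset.mem_Icc] at hi hj
    exact hζ.pow_inj (by lia) (by lia) h
  · obtain ⟨hz_ne, hz_pow⟩ := (mem_nontrivialRootsOfUnity hn).1 hz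
    obtain ⟨j, hj, rfl⟩ := hζ.eq_pow_of_pow_eq_one hz_pow
    have hj_ne : j ≠ 0 := by rintro rfl; exact hz_ne (pow_zero ζ)
    exact ⟨j, by rw [Finset.mem_coe, Finset.mem_Icc]; lia, rfl⟩

lemma prod_X_sub_C_nontrivialRootsOfUnity (hn : 0 < n) (hζ : IsPrimitiveRoot ζ n) :
    ∏ z ∈ nontrivialRootsOfUnity R n, (X - C (z - 1)) = shiftedGeomSum R n := by
  classical
  refine mul_right_cancel₀ X_ne_zero ?_
  rw [shiftedGeomSum_mul_X]
  have factorization := congrArg (comp · (X + 1)) (X_pow_sub_one_eq_prod hn hζ)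
  simp only [sub_comp, X_pow_comp, one_comp, prod_comp, X_comp, C_comp] at factorization
  rw [factorization, ← Finset.prod_erase_mul _ _ (one_mem_nthRootsFinset hn), C_1,
    add_sub_cancel_right, nontrivialRootsOfUnity]
  congr 1
  refine Finset.prod_congr rfl fun z _ ↦ ?_
  rw [C_sub, C_1]
  ring

end RootsOfUnity

section Reciprocity

open Polynomial Lagrange

variable {K ι : Type*} [Field K] [Fintype ι] {a : ι → ℕ} {ζ : ι → K}

lemma nodal_sigma_nontrivialRootsOfUnity (ha : ∀ i, 0 < a i)
    (hζ : ∀ i, IsPrimitiveRoot (ζ i) (a i)) :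
    nodal (Finset.univ.sigma fun i ↦ nontrivialRootsOfUnity K (a i)) (fun x ↦ x.2 - 1) =
      ∏ i, shiftedGeomSum K (a i) := by
  rw [nodal_eq, Finset.prod_sigma]
  exact Finset.prod_congr rfl fun i _ ↦ prod_X_sub_C_nontrivialRootsOfUnity (ha i) (hζ i)

lemma injOn_sigma_nontrivialRootsOfUnity (ha : ∀ i, 0 < a i)
    (hcop : Pairwise (Function.onFun Nat.Coprime a)) :
    Set.InjOn (fun x : Σ _ : ι, K ↦ x.2 - 1)
      (Finset.univ.sigma fun i ↦ nontrivialRootsOfUnity K (a i)) := by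
  rintro ⟨i, z⟩ hz ⟨j, w⟩ hw h
  obtain rfl : z = w := sub_left_inj.1 h
  rw [Finset.mem_coe, Finset.mem_sigma, mem_nontrivialRootsOfUnity (ha _)] at hz hw
  suffices i = j by rw [this]
  by_contra hij
  have := pow_gcd_eq_one.2 ⟨hz.2.2, hw.2.2⟩
  rw [(hcop hij).gcd_eq_one, pow_one] at this
  exact hz.2.1 this

variable [DecidableEq ι]

/-- The Fourier–Dedekind sum
`s_n(a_1, …, â_i, …, a_d; a_i) = (1 / a_i) ∑_{z ^ a_i = 1, z ≠ 1} z ^ n / ∏_{j ≠ i} (z ^ a_j - 1)`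
of Beck, Diaz and Robins, up to the sign `(-1) ^ (d - 1)`. -/
noncomputable def fourierDedekindSum (K : Type*) [Field K] (n : ℕ) (a : ι → ℕ) (i : ι) : K :=
  (∑ z ∈ nontrivialRootsOfUnity K (a i), z ^ n / ∏ j ∈ Finset.univ.erase i, (z ^ a j - 1)) / a i

lemma eval_derivative_prod_shiftedGeomSum {i : ι} {z : K} (hz : z ≠ 1) (hza : z ^ a i = 1) :
    (derivative (∏ j, shiftedGeomSum K (a j))).eval (z - 1) =
      (derivative (shiftedGeomSum K (a i))).eval (z - 1) *
        ∏ j ∈ Finset.univ.erase i, (shiftedGeomSum K (a j)).eval (z - 1) := by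
  rw [← Finset.mul_prod_erase Finset.univ _ (Finset.mem_univ i), derivative_mul, eval_add,
    eval_mul, eval_mul, eval_shiftedGeomSum_eq_zero hz hza, zero_mul, add_zero, eval_prod]

lemma pow_div_prod_pow_sub_one_div {i : ι} {z : K} (hz : z ≠ 1) (hza : z ^ a i = 1)
    (ha : 0 < a i) {m : ℕ} (hm : Fintype.card ι = m + 1) (n : ℕ) :
    z ^ (n + 1) / (∏ j ∈ Finset.univ.erase i, (z ^ a j - 1)) / a i =
      ((derivative (∏ j, shiftedGeomSum K (a j))).eval (z - 1))⁻¹ * z ^ n / (z - 1) ^ (m + 1) := by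
  have hz₀ : z ≠ 0 := by rintro rfl; simp [ha.ne'] at hza
  have denominator : ∏ j ∈ Finset.univ.erase i, (z ^ a j - 1) =
      (∏ j ∈ Finset.univ.erase i, (shiftedGeomSum K (a j)).eval (z - 1)) * (z - 1) ^ m := by
    simp_rw [← eval_shiftedGeomSum_mul, Finset.prod_mul_distrib, Finset.prod_const,
      Finset.card_erase_of_mem (Finset.mem_univ i), Finset.card_univ, hm, Nat.add_sub_cancel]
  rw [denominator, eval_derivative_prod_shiftedGeomSum hz hza,
    ← eval_derivative_shiftedGeomSum_mul hz hza]
  field_simp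
  ring

/-- Both sides are, up to sign, sums of residues of `z ^ n / ∏ i, (z ^ a i - 1)`: on the left at the
nontrivial roots of unity, on the right at `1`. -/
theorem sum_fourierDedekindSum (ha : ∀ i, 0 < a i)
    (hcop : Pairwise (Function.onFun Nat.Coprime a)) (hζ : ∀ i, IsPrimitiveRoot (ζ i) (a i))
    {m n : ℕ} (hm : Fintype.card ι = m + 1) (hn : n + 1 < ∑ i, a i) :
    ∑ i, fourierDedekindSum K (n + 1) a i = -PowerSeries.coeff m
      ((((X + 1) ^ n : K[X]) : PowerSeries K) *
        ((∏ i, shiftedGeomSum K (a i) : K[X]) : PowerSeries K)⁻¹) := by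
  classical
  set s : Finset (Σ _ : ι, K) := Finset.univ.sigma fun i ↦ nontrivialRootsOfUnity K (a i)
  have hnodal := nodal_sigma_nontrivialRootsOfUnity ha hζ
  have ne_one : ∀ x ∈ s, x.2 - 1 ≠ 0 := fun x hx ↦
    sub_ne_zero.2 ((mem_nontrivialRootsOfUnity (ha x.1)).1 (Finset.mem_sigma.1 hx).2).1
  have card_add : s.card + (m + 1) = ∑ i, a i := by
    rw [Finset.card_sigma, ← hm, Fintype.card_eq_sum_ones, ← Finset.sum_add_distrib]
    refine Finset.sum_congr rfl fun i _ ↦ ?_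
    rw [card_nontrivialRootsOfUnity (ha i) (hζ i), Nat.sub_add_cancel (ha i)]
  have degree_lt : ((X + 1) ^ n : K[X]).degree < (s.card + m : ℕ) := by
    rw [← C_1, degree_pow, degree_X_add_C, nsmul_one]
    exact_mod_cast (by lia : n < s.card + m)
  rw [← hnodal, ← sum_nodalWeight_mul_eval_div_pow (injOn_sigma_nontrivialRootsOfUnity ha hcop)
    ne_one degree_lt, Finset.sum_sigma]
  refine Finset.sum_congr rfl fun i _ ↦ ?_
  rw [fourierDedekindSum, Finset.sum_div]
  refine Finset.sum_congr rfl fun z hz ↦ ?_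
  obtain ⟨hz_ne, hz_pow⟩ := (mem_nontrivialRootsOfUnity (ha i)).1 hz
  rw [nodalWeight_eq_eval_derivative_nodal (Finset.mem_sigma.2 ⟨Finset.mem_univ i, hz⟩), hnodal,
    pow_div_prod_pow_sub_one_div hz_ne hz_pow (ha i) hm]
  simp

end Reciprocity

section ThreeTermReciprocity

open Polynomial

variable {K : Type*} [Field K]

lemma coeff_two_mul (F G : PowerSeries K) :
    PowerSeries.coeff 2 (F * G) = PowerSeries.constantCoeff F * PowerSeries.coeff 2 G +
      PowerSeries.coeff 1 F * PowerSeries.coeff 1 G +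
      PowerSeries.coeff 2 F * PowerSeries.constantCoeff G := by
  rw [PowerSeries.coeff_mul, Finset.Nat.sum_antidiagonal_eq_sum_range_succ_mk,
    Finset.sum_range_succ, Finset.sum_range_succ, Finset.sum_range_one,
    PowerSeries.coeff_zero_eq_constantCoeff]

lemma coeff_two_mul_inv {D : PowerSeries K} (hD : PowerSeries.constantCoeff D ≠ 0)
    (F : PowerSeries K) :
    PowerSeries.coeff 2 (F * D⁻¹) =
      (PowerSeries.coeff 2 F * PowerSeries.constantCoeff D ^ 2
        - PowerSeries.coeff 1 F * PowerSeries.constantCoeff D * PowerSeries.coeff 1 D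
        + PowerSeries.constantCoeff F * (PowerSeries.coeff 1 D ^ 2
          - PowerSeries.constantCoeff D * PowerSeries.coeff 2 D)) /
      PowerSeries.constantCoeff D ^ 3 := by
  have mul_inv : D * D⁻¹ = 1 := PowerSeries.mul_inv_cancel D hD
  obtain ⟨G, rfl⟩ : ∃ G, F = D * G := ⟨D⁻¹ * F, by rw [← mul_assoc, mul_inv, one_mul]⟩
  rw [mul_right_comm, mul_inv, one_mul, coeff_two_mul, PowerSeries.coeff_one_mul, map_mul]
  field_simp
  ring

variable [CharZero K]

lemma cast_choose_three (n : ℕ) : (n.choose 3 : K) = n * (n - 1) * (n - 2) / 6 := by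
  rw [Nat.cast_choose_eq_descPochhammer_div]
  simp [descPochhammer_succ_eval, Nat.factorial]

theorem coeff_two_X_add_one_pow_mul_inv {p q r : ℕ} (hp : 0 < p) (hq : 0 < q) (hr : 0 < r)
    (n : ℕ) :
    PowerSeries.coeff 2 ((((X + 1) ^ n : K[X]) : PowerSeries K) *
        ((shiftedGeomSum K p * shiftedGeomSum K q * shiftedGeomSum K r : K[X]) : PowerSeries K)⁻¹) =
      (6 * (n + 1) ^ 2 - 6 * (n + 1) * (p + q + r) + (p ^ 2 + q ^ 2 + r ^ 2)
        + 3 * (p * q + p * r + q * r)) / (12 * p * q * r) := by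
  have hp₀ : (p : K) ≠ 0 := by exact_mod_cast hp.ne'
  have hq₀ : (q : K) ≠ 0 := by exact_mod_cast hq.ne'
  have hr₀ : (r : K) ≠ 0 := by exact_mod_cast hr.ne'
  set D : PowerSeries K :=
    ((shiftedGeomSum K p * shiftedGeomSum K q * shiftedGeomSum K r : K[X]) : PowerSeries K) with hD
  rw [Polynomial.coe_mul, Polynomial.coe_mul] at hD
  have constantCoeff_D : PowerSeries.constantCoeff D = p * q * r := by
    simp only [hD, map_mul, constantCoeff_coe, coeff_shiftedGeomSum, zero_add,
      Nat.choose_one_right]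
  have coeff_one_D : PowerSeries.coeff 1 D = p * q * r * (p + q + r - 3) / 2 := by
    simp only [hD, PowerSeries.coeff_one_mul, map_mul, constantCoeff_coe, coeff_coe,
      coeff_shiftedGeomSum, zero_add, Nat.choose_one_right, Nat.reduceAdd, Nat.cast_choose_two]
    ring
  have coeff_two_D : PowerSeries.coeff 2 D = p * q * r *
      (((p - 1) * (p - 2) + (q - 1) * (q - 2) + (r - 1) * (r - 2)) / 6 +
        ((p - 1) * (q - 1) + (p - 1) * (r - 1) + (q - 1) * (r - 1)) / 4) := by
    simp only [hD, coeff_two_mul, PowerSeries.coeff_one_mul, map_mul, constantCoeff_coe, coeff_coe,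
      coeff_shiftedGeomSum, zero_add, Nat.choose_one_right, Nat.reduceAdd, Nat.cast_choose_two,
      cast_choose_three]
    ring
  rw [coeff_two_mul_inv (by rw [constantCoeff_D]; positivity)]
  simp only [constantCoeff_D, coeff_one_D, coeff_two_D, constantCoeff_coe, coeff_coe,
    coeff_X_add_one_pow, Nat.choose_zero_right, Nat.choose_one_right, Nat.cast_choose_two,
    Nat.cast_one]
  field_simp
  ring

theorem sum_fourierDedekindSum_three {a : Fin 3 → ℕ} {ζ : Fin 3 → K} (ha : ∀ i, 0 < a i)
    (hcop : Pairwise (Function.onFun Nat.Coprime a)) (hζ : ∀ i, IsPrimitiveRoot (ζ i) (a i))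
    {n : ℕ} (hn : n + 1 < ∑ i, a i) :
    ∑ i, fourierDedekindSum K (n + 1) a i =
      -(6 * (n + 1) ^ 2 - 6 * (n + 1) * (a 0 + a 1 + a 2) + (a 0 ^ 2 + a 1 ^ 2 + a 2 ^ 2)
        + 3 * (a 0 * a 1 + a 0 * a 2 + a 1 * a 2)) / (12 * a 0 * a 1 * a 2) := by
  rw [sum_fourierDedekindSum ha hcop hζ (Fintype.card_fin 3) hn, Fin.prod_univ_three,
    coeff_two_X_add_one_pow_mul_inv (ha 0) (ha 1) (ha 2), neg_div]

end ThreeTermReciprocity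

section CosecantSums

lemma fourierDedekindSum_fin_three {K : Type*} [Field K] {n : ℕ} {a : Fin 3 → ℕ} {i j k : Fin 3}
    (hi : Finset.univ.erase i = {j, k}) (hjk : j ≠ k) :
    fourierDedekindSum K n a i =
      (∑ z ∈ nontrivialRootsOfUnity K (a i), z ^ n / ((z ^ a j - 1) * (z ^ a k - 1))) / a i := by
  simp only [fourierDedekindSum, hi, Finset.prod_pair hjk]

lemma one_div_sin_eq_exp (t : ℂ) : 1 / Complex.sin t =
    2 * Complex.I * Complex.exp (t * Complex.I) / (Complex.exp (t * Complex.I) ^ 2 - 1) := by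
  have sin_eq : Complex.sin t = (Complex.exp (t * Complex.I) ^ 2 - 1) /
      (2 * Complex.I * Complex.exp (t * Complex.I)) := by
    rw [Complex.sin, neg_mul, Complex.exp_neg]
    field_simp
    rw [Complex.I_sq]
    ring
  rw [sin_eq, one_div_div]

theorem ofReal_cosecSum_neg_one {p q r n : ℕ} (hp : 0 < p) (hn : p + q + r = 2 * n) :
    ((cosecSum q r p (-1) : ℝ) : ℂ) = -4 *
      ((∑ z ∈ nontrivialRootsOfUnity ℂ p, z ^ n / ((z ^ q - 1) * (z ^ r - 1))) / p) := by
  have hp₀ : (p : ℂ) ≠ 0 := by exact_mod_cast hp.ne'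
  rw [sum_nontrivialRootsOfUnity hp (Complex.isPrimitiveRoot_exp p hp.ne'), cosecSum]
  push_cast
  rw [Int.natAbs_natCast, Finset.mul_sum, Finset.sum_div, Finset.mul_sum]
  refine Finset.sum_congr rfl fun j _ ↦ ?_
  rw [one_div_sin_eq_exp, one_div_sin_eq_exp]
  set E := Complex.exp (j * π / p * Complex.I) with hE
  have exp_eq_pow (m : ℕ) : Complex.exp (j * m * π / p * Complex.I) = E ^ m := by
    rw [hE, ← Complex.exp_nat_mul]
    congr 1
    ring
  have root_eq_sq : Complex.exp (2 * π * Complex.I / p) ^ j = E ^ 2 := by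
    rw [hE, ← Complex.exp_nat_mul, ← Complex.exp_nat_mul]
    congr 1
    push_cast
    ring
  have sign_eq_pow : (-1 : ℂ) ^ j = E ^ p := by
    rw [hE, ← Complex.exp_nat_mul, ← Complex.exp_pi_mul_I, ← Complex.exp_nat_mul]
    congr 1
    field_simp
  have numerator : (E ^ 2) ^ n = E ^ p * E ^ q * E ^ r := by
    rw [← pow_mul, ← hn, pow_add, pow_add]
  rw [exp_eq_pow, exp_eq_pow, root_eq_sq, sign_eq_pow, numerator, pow_right_comm E 2 q,
    pow_right_comm E 2 r]
  generalize (E ^ q) ^ 2 - 1 = u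
  generalize (E ^ r) ^ 2 - 1 = v
  linear_combination (4 * E ^ p * E ^ q * E ^ r / (u * v) / p) * Complex.I_sq

lemma pairwise_coprime_three {p q r : ℕ} (hpq : p.Coprime q) (hpr : p.Coprime r)
    (hqr : q.Coprime r) : Pairwise (Function.onFun Nat.Coprime ![p, q, r]) := by
  intro i j hij
  fin_cases i <;> fin_cases j
  exacts [absurd rfl hij, hpq, hpr, hpq.symm, absurd rfl hij, hqr, hpr.symm, hqr.symm,
    absurd rfl hij]

theorem cosecSum_reciprocity_nat {p q r : ℕ} (hp : 0 < p) (hq : 0 < q) (hr : 0 < r)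
    (hpq : p.Coprime q) (hpr : p.Coprime r) (hqr : q.Coprime r) (heven : Even (p + q + r)) :
    cosecSum q r p (-1) + cosecSum p r q (-1) + cosecSum p q r (-1) =
      -(p : ℝ) / (6 * q * r) - q / (6 * p * r) - r / (6 * p * q) := by
  obtain ⟨n, hn⟩ : ∃ n, p + q + r = 2 * (n + 1) := by
    obtain ⟨k, hk⟩ := heven
    exact ⟨k - 1, by lia⟩
  have hn_cast : (n : ℂ) + 1 = (p + q + r) / 2 := by
    rw [eq_div_iff two_ne_zero, mul_comm]
    exact_mod_cast hn.symm
  have pos : ∀ i, 0 < ![p, q, r] i := by simp [Fin.forall_fin_succ, hp, hq, hr]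
  have reciprocity := sum_fourierDedekindSum_three (n := n) pos (pairwise_coprime_three hpq hpr hqr)
    (fun i ↦ Complex.isPrimitiveRoot_exp _ (pos i).ne') (by
      simp only [Fin.sum_univ_three, Matrix.cons_val]
      lia)
  rw [Fin.sum_univ_three,
    fourierDedekindSum_fin_three (i := 0) (j := 1) (k := 2) (by decide) (by decide),
    fourierDedekindSum_fin_three (i := 1) (j := 0) (k := 2) (by decide) (by decide),
    fourierDedekindSum_fin_three (i := 2) (j := 0) (k := 1) (by decide) (by decide),
    hn_cast] at reciprocity
  simp only [Matrix.cons_val] at reciprocity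
  apply Complex.ofReal_injective
  rw [Complex.ofReal_add, Complex.ofReal_add, ofReal_cosecSum_neg_one hp hn,
    ofReal_cosecSum_neg_one hq (n := n + 1) (by lia),
    ofReal_cosecSum_neg_one hr (n := n + 1) (by lia), ← mul_add, ← mul_add, reciprocity]
  push_cast
  field_simp
  ring

variable (q r p : ℤ) (ε : ℝ)

lemma cosecSum_comm : cosecSum q r p ε = cosecSum r q p ε := by
  simp only [cosecSum, mul_right_comm]

lemma cosecSum_neg_left : cosecSum (-q) r p ε = -cosecSum q r p ε := by
  simp only [cosecSum, Int.cast_neg, mul_neg, neg_mul, neg_div, Real.sin_neg, one_div, inv_neg,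
    Finset.sum_neg_distrib]

lemma cosecSum_neg_middle : cosecSum q (-r) p ε = -cosecSum q r p ε := by
  rw [cosecSum_comm, cosecSum_neg_left, cosecSum_comm]

lemma cosecSum_neg_right : cosecSum q r (-p) ε = -cosecSum q r p ε := by
  simp only [cosecSum, Int.cast_neg, Int.natAbs_neg, div_neg, Real.sin_neg, mul_neg, neg_mul,
    neg_neg]

lemma cosecSum_one_right : cosecSum q r 1 ε = 0 := by
  simp [cosecSum]

end CosecantSums

theorem stmt_17_general {p q r : ℤ} (hp : p ≠ 0) (hq : q ≠ 0) (hr : r ≠ 0)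
    (hpq : IsCoprime p q) (hpr : IsCoprime p r) (hqr : IsCoprime q r) (heven : Even (p + q + r)) :
    cosecSum q r p (-1) + cosecSum p r q (-1) + cosecSum p q r (-1) =
      -(p : ℝ) / (6 * q * r) - q / (6 * p * r) - r / (6 * p * q) := by
  have reciprocity := cosecSum_reciprocity_nat (Int.natAbs_pos.2 hp) (Int.natAbs_pos.2 hq)
    (Int.natAbs_pos.2 hr) (Int.isCoprime_iff_gcd_eq_one.1 hpq)
    (Int.isCoprime_iff_gcd_eq_one.1 hpr) (Int.isCoprime_iff_gcd_eq_one.1 hqr) (by grind)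
  obtain ⟨a, rfl | rfl⟩ := p.eq_nat_or_neg <;> obtain ⟨b, rfl | rfl⟩ := q.eq_nat_or_neg <;>
    obtain ⟨c, rfl | rfl⟩ := r.eq_nat_or_neg <;>
    simp only [cosecSum_neg_left, cosecSum_neg_middle, cosecSum_neg_right, Int.natAbs_neg,
      Int.natAbs_natCast, Int.cast_neg, Int.cast_natCast] at reciprocity ⊢ <;>
    first | linear_combination reciprocity | linear_combination -reciprocity

/-- Reciprocity for Dedekind cosecant sums: for coprime nonzero integers `p, q` of
opposite parity, `S(q,1,p;−1) + S(p,1,q;−1) = −p/(6q) − q/(6p) − 1/(6pq)`. -/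
theorem stmt_17 (p q : ℤ) (hp : p ≠ 0) (hq : q ≠ 0) (hcop : Int.gcd p q = 1)
    (hpar : ¬ p ≡ q [ZMOD 2]) :
    cosecSum q 1 p (-1) + cosecSum p 1 q (-1) =
      -(p : ℝ) / (6 * (q : ℝ)) - (q : ℝ) / (6 * (p : ℝ))
        - 1 / (6 * (p : ℝ) * (q : ℝ)) := by
  have heven : Even (p + q + 1) := by grind [Int.ModEq]
  simpa [cosecSum_one_right] using stmt_17_general hp hq one_ne_zero
    (Int.isCoprime_iff_gcd_eq_one.2 hcop) isCoprime_one_right isCoprime_one_right heven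
end
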